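/- Let Y* ∈ ℝ^{p×r}_*, X* := Y*Y*ᵀ, κ* := σ_1(Y*)/σ_r(Y*). Let 0 ≤ μ ≤ 1/3 and let Y ∈ ℝ^{p×r}_* satisfy d(Y,Y*) ≤ μσ_r(Y*)/κ*. Then for every θ ∈ ℝ^{p×r} with Yᵀθ symmetric: (2(1 − μ/κ*)² − (14/3)μ)·σ_r(Y*)²·‖θ‖²_F ≤ ‖Yθᵀ + θYᵀ‖²_F + 2⟨YYᵀ − X*, θθᵀ⟩ ≤ (4(σ_1(Y*) + μσ_r(Y*)/κ*)² + (14/3)μ·σ_r(Y*)²)·‖θ‖²_F. In particular, if μ is such that 2(1 − μ/κ*)² − (14/3)μ > 0, then H([Y]) = (1/2)‖YYᵀ − X*‖²_F is geodesically strongly convex and smooth on the region {Y : d(Y,Y*) ≤ μσ_r(Y*)/κ*}. -/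

import Mathlib

open Matrix

/-- Trace inner product `⟨A,B⟩ = tr(AᵀB)`. -/
noncomputable def trInner {m n : ℕ} (A B : Matrix (Fin m) (Fin n) ℝ) : ℝ :=
  ∑ i, ∑ j, A i j * B i j

/-- Frobenius norm. -/
noncomputable def frob {m n : ℕ} (A : Matrix (Fin m) (Fin n) ℝ) : ℝ :=
  Real.sqrt (∑ i, ∑ j, (A i j) ^ 2)

open scoped Classical in
/-- The `i`-th largest eigenvalue (1-indexed, `1 ≤ i ≤ n`) of a Hermitian matrix; junk value 0
otherwise. -/
noncomputable def eigVal {n : ℕ} (A : Matrix (Fin n) (Fin n) ℝ) (i : ℕ) : ℝ :=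
  if hA : A.IsHermitian then
    if h : n - i < n then hA.eigenvalues (Tuple.sort hA.eigenvalues ⟨n - i, h⟩) else 0
  else 0

/-- The `i`-th largest singular value (1-indexed) of `Y`, so `sval Y 1 = ‖Y‖` (spectral norm)
and `sval Y r` is the least singular value. -/
noncomputable def sval {p r : ℕ} (Y : Matrix (Fin p) (Fin r) ℝ) (i : ℕ) : ℝ :=
  Real.sqrt (eigVal (Yᵀ * Y) i)

/-- `Q` is an orthogonal matrix. -/
def IsOrtho {r : ℕ} (Q : Matrix (Fin r) (Fin r) ℝ) : Prop := Qᵀ * Q = 1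

/-- The quotient distance `d(Y₁,Y₂) = min_{Q ∈ O(r)} ‖Y₂Q − Y₁‖_F`. -/
noncomputable def dOrth {p r : ℕ} (Y₁ Y₂ : Matrix (Fin p) (Fin r) ℝ) : ℝ :=
  sInf {c | ∃ Q : Matrix (Fin r) (Fin r) ℝ, IsOrtho Q ∧ c = frob (Y₂ * Q - Y₁)}



lemma frob_nonneg {m n : ℕ} (A : Matrix (Fin m) (Fin n) ℝ) : 0 ≤ frob A := Real.sqrt_nonneg _

lemma frob_sq {m n : ℕ} (A : Matrix (Fin m) (Fin n) ℝ) :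
    frob A ^ 2 = ∑ i, ∑ j, (A i j) ^ 2 :=
  Real.sq_sqrt (Finset.sum_nonneg fun _ _ => Finset.sum_nonneg fun _ _ => sq_nonneg _)

lemma frob_sq_tr {m n : ℕ} (A : Matrix (Fin m) (Fin n) ℝ) :
    frob A ^ 2 = (Aᵀ * A).trace := by
  rw [frob_sq, Finset.sum_comm]
  simp [Matrix.trace, Matrix.mul_apply, sq]

lemma trInner_tr {m n : ℕ} (A B : Matrix (Fin m) (Fin n) ℝ) :
    trInner A B = (Aᵀ * B).trace := by
  rw [trInner, Finset.sum_comm]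
  simp [Matrix.trace, Matrix.mul_apply]

section frobNorm
attribute [local instance] Matrix.frobeniusNormedAddCommGroup

lemma frob_eq_norm {m n : ℕ} (A : Matrix (Fin m) (Fin n) ℝ) : frob A = ‖A‖ := by
  rw [Matrix.frobenius_norm_def, frob, Real.sqrt_eq_rpow]
  simp

lemma frob_add_le {m n : ℕ} (A B : Matrix (Fin m) (Fin n) ℝ) :
    frob (A + B) ≤ frob A + frob B := by
  simp only [frob_eq_norm]; exact norm_add_le A B

lemma frob_mul_le {l m n : ℕ} (A : Matrix (Fin l) (Fin m) ℝ) (B : Matrix (Fin m) (Fin n) ℝ) :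
    frob (A * B) ≤ frob A * frob B := by
  simp only [frob_eq_norm]; exact Matrix.frobenius_norm_mul A B

lemma frob_transpose {m n : ℕ} (A : Matrix (Fin m) (Fin n) ℝ) : frob Aᵀ = frob A := by
  simp only [frob_eq_norm]; exact Matrix.frobenius_norm_transpose A

lemma frob_neg {m n : ℕ} (A : Matrix (Fin m) (Fin n) ℝ) : frob (-A) = frob A := by
  simp only [frob_eq_norm]; exact norm_neg A

end frobNorm

lemma frob_sub_comm {m n : ℕ} (A B : Matrix (Fin m) (Fin n) ℝ) :
    frob (A - B) = frob (B - A) := by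
  rw [← frob_neg, neg_sub]

/-- Cauchy--Schwarz. -/
lemma trInner_le {m n : ℕ} (A B : Matrix (Fin m) (Fin n) ℝ) :
    trInner A B ≤ frob A * frob B := by
  have h := Finset.sum_mul_sq_le_sq_mul_sq (Finset.univ : Finset (Fin m × Fin n))
    (fun x => A x.1 x.2) (fun x => B x.1 x.2)
  rw [Fintype.sum_prod_type, Fintype.sum_prod_type, Fintype.sum_prod_type] at h
  simp only [] at h
  rw [← frob_sq, ← frob_sq, ← mul_pow] at h
  exact (le_abs_self _).trans (abs_le_of_sq_le_sq h (mul_nonneg (frob_nonneg _) (frob_nonneg _)))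

lemma frob_ortho_mul {r k : ℕ} (Q : Matrix (Fin r) (Fin r) ℝ) (hQ : IsOrtho Q)
    (A : Matrix (Fin r) (Fin k) ℝ) : frob (Q * A) = frob A := by
  have : frob (Q * A) ^ 2 = frob A ^ 2 := by
    rw [frob_sq_tr, frob_sq_tr, Matrix.transpose_mul, Matrix.mul_assoc, ← Matrix.mul_assoc Qᵀ,
      show Qᵀ * Q = 1 from hQ, Matrix.one_mul]
  exact (sq_eq_sq₀ (frob_nonneg _) (frob_nonneg _)).1 this

lemma isOrtho_compact (r : ℕ) : IsCompact {Q : Matrix (Fin r) (Fin r) ℝ | IsOrtho Q} := by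
  have hK : IsCompact (Set.pi Set.univ fun _ : Fin r => Set.pi Set.univ
      fun _ : Fin r => Set.Icc (-1 : ℝ) 1) :=
    isCompact_univ_pi fun _ => isCompact_univ_pi fun _ => isCompact_Icc
  refine IsCompact.of_isClosed_subset hK ?_ ?_
  · exact isClosed_eq (by fun_prop) continuous_const
  · intro Q hQ i _ j _
    have : Q ∈ Matrix.unitaryGroup (Fin r) ℝ := by
      exact (Matrix.mem_orthogonalGroup_iff' _ _).2 hQ
    have h := entry_norm_bound_of_unitary this i j
    rw [Real.norm_eq_abs] at h
    exact abs_le.1 h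

lemma dOrth_attained {p r : ℕ} (Y₁ Y₂ : Matrix (Fin p) (Fin r) ℝ) :
    ∃ Q : Matrix (Fin r) (Fin r) ℝ, IsOrtho Q ∧ frob (Y₂ * Q - Y₁) = dOrth Y₁ Y₂ := by
  have hc : Continuous fun Q : Matrix (Fin r) (Fin r) ℝ => frob (Y₂ * Q - Y₁) := by
    unfold frob
    refine Real.continuous_sqrt.comp ?_
    refine continuous_finsetSum _ fun i _ => continuous_finsetSum _ fun j _ => ?_
    refine Continuous.pow ?_ 2
    exact Continuous.matrix_elem (by fun_prop) i j
  have hI := (isOrtho_compact r).image hc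
  have hne : ((fun Q : Matrix (Fin r) (Fin r) ℝ => frob (Y₂ * Q - Y₁)) ''
      {Q | IsOrtho Q}).Nonempty := ⟨_, 1, by simp [IsOrtho], rfl⟩
  obtain ⟨Q, hQ, h⟩ := hI.sInf_mem hne
  refine ⟨Q, hQ, ?_⟩
  simp only at h
  rw [h, dOrth]
  congr 1
  ext c
  constructor
  · rintro ⟨Q, h1, h2⟩; exact ⟨Q, h1, h2.symm⟩
  · rintro ⟨Q, h1, h2⟩; exact ⟨Q, h1, h2.symm⟩

lemma gram_spec {p r k : ℕ} (Z : Matrix (Fin p) (Fin r) ℝ) (hA : (Zᵀ * Z).IsHermitian)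
    (A : Matrix (Fin r) (Fin k) ℝ) :
    ∃ B : Matrix (Fin r) (Fin k) ℝ, frob B = frob A ∧
      frob (Z * A) ^ 2 = ∑ i, hA.eigenvalues i * ∑ j, B i j ^ 2 := by
  set U : Matrix (Fin r) (Fin r) ℝ := hA.eigenvectorUnitary.1 with hU
  have hUU : U * Uᵀ = 1 := by
    have := hA.eigenvectorUnitary.2
    exact (Matrix.mem_orthogonalGroup_iff _ _).1 this
  refine ⟨Uᵀ * A, frob_ortho_mul _ (by simpa [IsOrtho] using hUU) A, ?_⟩
  have hs : Zᵀ * Z = U * diagonal hA.eigenvalues * Uᵀ := by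
    have := hA.spectral_theorem
    rw [Unitary.conjStarAlgAut_apply] at this
    exact this
  clear_value U
  clear hU
  generalize hA.eigenvalues = e at hs ⊢
  have : (Z * A)ᵀ * (Z * A) = (Uᵀ * A)ᵀ * (diagonal e * (Uᵀ * A)) := by
    rw [Matrix.transpose_mul, Matrix.mul_assoc, ← Matrix.mul_assoc Zᵀ, hs]
    simp only [Matrix.transpose_mul, Matrix.transpose_transpose, Matrix.mul_assoc]
  rw [frob_sq_tr, this, Matrix.trace]
  simp only [Matrix.diag_apply, Matrix.mul_apply (M := (Uᵀ * A)ᵀ), Matrix.diagonal_mul,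
    Matrix.transpose_apply]
  rw [Finset.sum_comm]
  refine Finset.sum_congr rfl fun i _ => ?_
  rw [Finset.mul_sum]
  refine Finset.sum_congr rfl fun j _ => ?_
  ring

lemma sval_facts {p r : ℕ} (hr : 0 < r) (Z : Matrix (Fin p) (Fin r) ℝ) (hZ : Z.rank = r) :
    0 < sval Z r ∧ sval Z r ≤ sval Z 1 ∧ ∀ (k : ℕ) (A : Matrix (Fin r) (Fin k) ℝ),
      sval Z r * frob A ≤ frob (Z * A) ∧ frob (Z * A) ≤ sval Z 1 * frob A := by
  have hps : (Zᵀ * Z).PosSemidef := by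
    simpa using Matrix.posSemidef_conjTranspose_mul_self Z
  have hA : (Zᵀ * Z).IsHermitian := hps.1
  have hnn : ∀ i, 0 ≤ hA.eigenvalues i := fun i => hps.eigenvalues_nonneg i
  have hne : ∀ i, hA.eigenvalues i ≠ 0 := by
    have h := hA.rank_eq_card_non_zero_eigs
    rw [Matrix.rank_transpose_mul_self, hZ] at h
    intro i hi
    have : Fintype.card {i // hA.eigenvalues i ≠ 0} < Fintype.card (Fin r) :=
      Fintype.card_subtype_lt (x := i) (by simpa using hi)
    simp only [Fintype.card_fin] at this
    omega
  have hpos : ∀ i, 0 < hA.eigenvalues i := fun i => lt_of_le_of_ne (hnn i) (hne i).symm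
  have hmono := Tuple.monotone_sort hA.eigenvalues
  obtain ⟨a, ha, hal⟩ : ∃ a, eigVal (Zᵀ * Z) r = hA.eigenvalues a ∧
      ∀ i, hA.eigenvalues a ≤ hA.eigenvalues i := by
    have h0 : r - r < r := by omega
    refine ⟨Tuple.sort hA.eigenvalues ⟨r - r, h0⟩, by rw [eigVal, dif_pos hA, dif_pos h0], fun i => ?_⟩
    have := hmono (a := ⟨r - r, h0⟩) (b := (Tuple.sort hA.eigenvalues).symm i)
      (by rw [Fin.le_def]; simp)
    simpa using this
  obtain ⟨b, hb, hbl⟩ : ∃ b, eigVal (Zᵀ * Z) 1 = hA.eigenvalues b ∧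
      ∀ i, hA.eigenvalues i ≤ hA.eigenvalues b := by
    have h0 : r - 1 < r := by omega
    refine ⟨Tuple.sort hA.eigenvalues ⟨r - 1, h0⟩, by rw [eigVal, dif_pos hA, dif_pos h0], fun i => ?_⟩
    have := hmono (b := ⟨r - 1, h0⟩) (a := (Tuple.sort hA.eigenvalues).symm i)
      (by rw [Fin.le_def]; simp; omega)
    simpa using this
  have e1 : sval Z r ^ 2 = hA.eigenvalues a := by rw [sval, ha, Real.sq_sqrt (hnn a)]
  have e2 : sval Z 1 ^ 2 = hA.eigenvalues b := by rw [sval, hb, Real.sq_sqrt (hnn b)]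
  have n1 : 0 ≤ sval Z r := Real.sqrt_nonneg _
  have n2 : 0 ≤ sval Z 1 := Real.sqrt_nonneg _
  refine ⟨?_, ?_, fun k A => ?_⟩
  · rw [sval, ha]; exact Real.sqrt_pos.2 (hpos a)
  · rw [sval, sval, ha, hb]; exact Real.sqrt_le_sqrt (hal b)
  · obtain ⟨B, hB, hBA⟩ := gram_spec Z hA A
    have hs : ∀ i, 0 ≤ ∑ j, B i j ^ 2 := fun i => Finset.sum_nonneg fun _ _ => sq_nonneg _
    constructor
    · refine le_of_sq_le_sq ?_ (frob_nonneg _)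
      rw [mul_pow, e1, ← hB, hBA, frob_sq, Finset.mul_sum]
      exact Finset.sum_le_sum fun i _ => mul_le_mul_of_nonneg_right (hal i) (hs i)
    · refine le_of_sq_le_sq ?_ (mul_nonneg n2 (frob_nonneg _))
      rw [mul_pow, e2, ← hB, hBA, frob_sq, Finset.mul_sum]
      exact Finset.sum_le_sum fun i _ => mul_le_mul_of_nonneg_right (hbl i) (hs i)

lemma frob_sym_sq {p r : ℕ} (Y θ : Matrix (Fin p) (Fin r) ℝ) (hs : (Yᵀ * θ).IsSymm) :
    frob (Y * θᵀ + θ * Yᵀ) ^ 2 = 2 * frob (Y * θᵀ) ^ 2 + 2 * frob (Yᵀ * θ) ^ 2 := by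
  have hs' : θᵀ * Y = Yᵀ * θ := by
    have := hs.eq
    simpa [Matrix.transpose_mul] using this
  have h1 : ((θ * Yᵀ) * (Y * θᵀ)).trace = frob (Y * θᵀ) ^ 2 := by
    rw [frob_sq_tr]; simp [Matrix.transpose_mul]
  have h2 : ((θ * Yᵀ) * (θ * Yᵀ)).trace = frob (Yᵀ * θ) ^ 2 := by
    rw [frob_sq_tr, hs.eq, Matrix.mul_assoc, Matrix.trace_mul_comm, Matrix.mul_assoc,
      Matrix.mul_assoc, Matrix.mul_assoc]
  have h3 : ((Y * θᵀ) * (Y * θᵀ)).trace = frob (Yᵀ * θ) ^ 2 := by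
    rw [frob_sq_tr, hs.eq, ← hs', Matrix.mul_assoc, Matrix.trace_mul_comm, Matrix.mul_assoc,
      Matrix.mul_assoc, Matrix.mul_assoc]
  have h4 : ((Y * θᵀ) * (θ * Yᵀ)).trace = frob (Y * θᵀ) ^ 2 := by
    rw [← h1, Matrix.trace_mul_comm]
  rw [frob_sq_tr, Matrix.transpose_add, Matrix.transpose_mul, Matrix.transpose_mul,
    Matrix.transpose_transpose, Matrix.transpose_transpose, Matrix.add_mul, Matrix.mul_add,
    Matrix.mul_add, Matrix.trace_add, Matrix.trace_add, Matrix.trace_add, h1, h2, h3, h4]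
  ring

lemma trInner_gram {p r : ℕ} (Y θ : Matrix (Fin p) (Fin r) ℝ) :
    trInner (Y * Yᵀ) (θ * θᵀ) = frob (Yᵀ * θ) ^ 2 := by
  rw [trInner_tr, frob_sq_tr, Matrix.transpose_mul, Matrix.transpose_mul,
    Matrix.transpose_transpose, ← Matrix.mul_assoc, Matrix.trace_mul_comm]
  simp only [Matrix.mul_assoc]

lemma trInner_sub {m n : ℕ} (A B C : Matrix (Fin m) (Fin n) ℝ) :
    trInner (A - B) C = trInner A C - trInner B C := by
  simp [trInner_tr, Matrix.sub_mul]

lemma frob_transpose_mul_le {p r k : ℕ} (Z : Matrix (Fin p) (Fin r) ℝ) (S : ℝ) (hS : 0 ≤ S)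
    (h : ∀ (k : ℕ) (A : Matrix (Fin r) (Fin k) ℝ), frob (Z * A) ≤ S * frob A)
    (θ : Matrix (Fin p) (Fin k) ℝ) : frob (Zᵀ * θ) ≤ S * frob θ := by
  by_cases h0 : frob (Zᵀ * θ) = 0
  · rw [h0]; exact mul_nonneg hS (frob_nonneg _)
  have hp : 0 < frob (Zᵀ * θ) := lt_of_le_of_ne (frob_nonneg _) (Ne.symm h0)
  have h1 : frob (Zᵀ * θ) ^ 2 = trInner (Z * (Zᵀ * θ)) θ := by
    rw [frob_sq_tr, trInner_tr, Matrix.transpose_mul Z, Matrix.mul_assoc]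
  have h2 := trInner_le (Z * (Zᵀ * θ)) θ
  have h3 := mul_le_mul_of_nonneg_right (h k (Zᵀ * θ)) (frob_nonneg θ)
  nlinarith

/-- local geodesic strong convexity of `H`: two-sided bounds on the lifted
Riemannian Hessian quadratic form of `H` in the region at quotient distance at most
`μ σ_r(Ystar)/κstar` from `Ystar`. -/
theorem stmt8 {p r : ℕ} (Ystar : Matrix (Fin p) (Fin r) ℝ) (hYs : Ystar.rank = r)
    (X : Matrix (Fin p) (Fin p) ℝ) (hX : X = Ystar * Ystarᵀ)
    (κ : ℝ) (hκ : κ = sval Ystar 1 / sval Ystar r)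
    (μ : ℝ) (hμ0 : 0 ≤ μ) (hμ1 : μ ≤ 1 / 3)
    (Y : Matrix (Fin p) (Fin r) ℝ) (hY : Y.rank = r)
    (hd : dOrth Y Ystar ≤ μ * sval Ystar r / κ) :
    ∀ θ : Matrix (Fin p) (Fin r) ℝ, (Yᵀ * θ).IsSymm →
      (2 * (1 - μ / κ) ^ 2 - (14 / 3) * μ) * (sval Ystar r) ^ 2 * (frob θ) ^ 2 ≤
        (frob (Y * θᵀ + θ * Yᵀ)) ^ 2 + 2 * trInner (Y * Yᵀ - X) (θ * θᵀ) ∧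
      (frob (Y * θᵀ + θ * Yᵀ)) ^ 2 + 2 * trInner (Y * Yᵀ - X) (θ * θᵀ) ≤
        (4 * (sval Ystar 1 + μ * sval Ystar r / κ) ^ 2 +
          (14 / 3) * μ * (sval Ystar r) ^ 2) * (frob θ) ^ 2 := by
  intro θ hθ
  rcases Nat.eq_zero_or_pos r with hr | hr
  · subst hr
    have h1 : frob θ = 0 := by simp [frob]
    have h2 : Y * θᵀ + θ * Yᵀ = 0 := by ext i j; simp [Matrix.mul_apply]
    have h3 : θ * θᵀ = 0 := by ext i j; simp [Matrix.mul_apply]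
    rw [h1, h2, h3]
    simp [frob, trInner]
  obtain ⟨hs, hsS, hb⟩ := sval_facts hr Ystar hYs
  obtain ⟨Q, hQ, hQd⟩ := dOrth_attained Y Ystar
  set s := sval Ystar r
  set S := sval Ystar 1
  have hS : 0 < S := lt_of_lt_of_le hs hsS
  have hQ' : Q * Qᵀ = 1 := mul_eq_one_comm.1 hQ
  set Z := Ystar * Q with hZ
  have hZX : X = Z * Zᵀ := by
    rw [hX, hZ, Matrix.transpose_mul, Matrix.mul_assoc, ← Matrix.mul_assoc Q, hQ', Matrix.one_mul]
  have hZb : ∀ (k : ℕ) (A : Matrix (Fin r) (Fin k) ℝ),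
      s * frob A ≤ frob (Z * A) ∧ frob (Z * A) ≤ S * frob A := by
    intro k A
    have := hb k (Q * A)
    rwa [frob_ortho_mul Q hQ, ← Matrix.mul_assoc] at this
  set δ := μ * s / κ with hδ
  have hδ' : δ * S = μ * s ^ 2 := by
    rw [hδ, hκ]; field_simp
  have hE : frob (Z - Y) ≤ δ := hQd ▸ hd
  have hE' : frob (Y - Z) ≤ δ := by rwa [frob_sub_comm]
  have hδ0 : 0 ≤ δ := le_trans (frob_nonneg _) hE
  have hδs : δ ≤ μ * s := by
    have : δ * S ≤ (μ * s) * S := by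
      rw [hδ']; nlinarith [mul_le_mul_of_nonneg_left hsS (mul_nonneg hμ0 hs.le)]
    exact le_of_mul_le_mul_right this hS
  have hδ2 : (1 - μ / κ) * s = s - δ := by rw [hδ]; ring
  have hδsq : δ ^ 2 ≤ μ / 3 * s ^ 2 := by
    have : δ ^ 2 ≤ (μ * s) ^ 2 := pow_le_pow_left₀ hδ0 hδs 2
    nlinarith [mul_nonneg (mul_nonneg hμ0 (sub_nonneg.2 hμ1)) (sq_nonneg s)]
  set t := frob θ
  have ht : 0 ≤ t := frob_nonneg θ
  -- bounds for Y θᵀ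
  have hm : ∀ {k l : ℕ} (D : Matrix (Fin k) (Fin l) ℝ) (A : Matrix (Fin l) (Fin p) ℝ),
      frob D ≤ δ → frob A = t → frob (D * A) ≤ δ * t := by
    intro k l D A h1 h2
    exact (frob_mul_le D A).trans (by rw [h2]; exact mul_le_mul_of_nonneg_right h1 ht)
  have hm' : ∀ {k : ℕ} (D : Matrix (Fin k) (Fin p) ℝ),
      frob D ≤ δ → frob (D * θ) ≤ δ * t := by
    intro k D h1
    exact (frob_mul_le D θ).trans (mul_le_mul_of_nonneg_right h1 ht)
  have htt : frob θᵀ = t := frob_transpose θ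
  have hlo : (s - δ) * t ≤ frob (Y * θᵀ) := by
    have h1 := (hZb p θᵀ).1
    have h2 := frob_add_le (Y * θᵀ) ((Z - Y) * θᵀ)
    rw [← Matrix.add_mul, add_sub_cancel] at h2
    have h3 := hm (Z - Y) θᵀ hE htt
    rw [htt] at h1
    linarith
  have hup : frob (Y * θᵀ) ≤ (S + δ) * t := by
    have h1 := (hZb p θᵀ).2
    have h2 := frob_add_le (Z * θᵀ) ((Y - Z) * θᵀ)
    rw [← Matrix.add_mul, add_sub_cancel] at h2
    have h3 := hm (Y - Z) θᵀ hE' htt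
    rw [htt] at h1
    linarith
  -- inner product term
  have ha : frob (Yᵀ * θ) ≤ frob (Zᵀ * θ) + δ * t := by
    have h2 := frob_add_le (Zᵀ * θ) ((Y - Z)ᵀ * θ)
    rw [← Matrix.add_mul, ← Matrix.transpose_add, add_sub_cancel] at h2
    have h3 := hm' (Y - Z)ᵀ (by rwa [frob_transpose])
    linarith
  have hb' : frob (Zᵀ * θ) ≤ frob (Yᵀ * θ) + δ * t := by
    have h2 := frob_add_le (Yᵀ * θ) ((Z - Y)ᵀ * θ)
    rw [← Matrix.add_mul, ← Matrix.transpose_add, add_sub_cancel] at h2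
    have h3 := hm' (Z - Y)ᵀ (by rwa [frob_transpose])
    linarith
  have hc : frob (Zᵀ * θ) ≤ S * t :=
    frob_transpose_mul_le Z S hS.le (fun k A => (hZb k A).2) θ
  have hin : trInner (Y * Yᵀ - X) (θ * θᵀ) = frob (Yᵀ * θ) ^ 2 - frob (Zᵀ * θ) ^ 2 := by
    rw [hZX, trInner_sub, trInner_gram, trInner_gram]
  have na : 0 ≤ frob (Yᵀ * θ) := frob_nonneg _
  have nb : 0 ≤ frob (Zᵀ * θ) := frob_nonneg _
  have hdt : 0 ≤ δ * t := mul_nonneg hδ0 ht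
  have hkey : δ * t * (2 * (S * t) + δ * t) ≤ 7 / 3 * μ * s ^ 2 * t ^ 2 := by
    have : δ * t * (2 * (S * t) + δ * t) = (2 * (δ * S) + δ ^ 2) * t ^ 2 := by ring
    rw [this, hδ']
    exact mul_le_mul_of_nonneg_right (by linarith) (sq_nonneg t)
  have hsum : frob (Yᵀ * θ) + frob (Zᵀ * θ) ≤ 2 * (S * t) + δ * t := by linarith
  have hmul := mul_le_mul_of_nonneg_left hsum hdt
  have hin1 : trInner (Y * Yᵀ - X) (θ * θᵀ) ≤ 7 / 3 * μ * s ^ 2 * t ^ 2 := by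
    rw [hin]
    have := mul_le_mul_of_nonneg_right (show frob (Yᵀ * θ) - frob (Zᵀ * θ) ≤ δ * t by linarith)
      (add_nonneg na nb)
    linarith
  have hin2 : -(7 / 3 * μ * s ^ 2 * t ^ 2) ≤ trInner (Y * Yᵀ - X) (θ * θᵀ) := by
    rw [hin]
    have := mul_le_mul_of_nonneg_right (show frob (Zᵀ * θ) - frob (Yᵀ * θ) ≤ δ * t by linarith)
      (add_nonneg na nb)
    linarith
  constructor
  · rw [frob_sym_sq Y θ hθ]
    have hsd : 0 ≤ s - δ := by nlinarith
    have h1 := pow_le_pow_left₀ (mul_nonneg hsd ht) hlo 2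
    have h2 : (2 * (1 - μ / κ) ^ 2 - (14 / 3) * μ) * s ^ 2 * t ^ 2 =
        2 * ((s - δ) * t) ^ 2 - 2 * (7 / 3 * μ * s ^ 2 * t ^ 2) := by
      rw [← hδ2]; ring
    rw [h2]
    have := sq_nonneg (frob (Yᵀ * θ))
    linarith
  · have h0 := frob_add_le (Y * θᵀ) (θ * Yᵀ)
    have h1 : frob (θ * Yᵀ) = frob (Y * θᵀ) := by
      rw [← frob_transpose]; simp [Matrix.transpose_mul]
    have h2 : frob (Y * θᵀ + θ * Yᵀ) ≤ 2 * ((S + δ) * t) := by linarith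
    have h3 := pow_le_pow_left₀ (frob_nonneg _) h2 2
    nlinarith
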